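/- Let d ≥ 2 be an integer, c > 0, t > 0, and for x = (x_1,…,x_d) ∈ ℝ^d with ‖x‖ < ct define p_1^1(x,t) := ( Γ(2(d+1)) / ( π^{(d−1)/2} (2ct)^{2d+1} (d+2) Γ(d+1) Γ((d−1)/2) ) ) · ( (3/(d−1)) (c²t² − ‖x‖²)^{(d+1)/2} − 2 x_d² (c²t² − ‖x‖²)^{(d−1)/2} + (d+1) x_d⁴ (c²t² − ‖x‖²)^{(d−3)/2} ). Then for every 0 < r < ct: ∫_{‖x‖ < r} p_1^1(x,t) dx = ∫₀^r f(s) ds, where f(s) := ( 2√π · Γ(2(d+1)) / ( (2ct)^{2d+1} (d+2) Γ(d+1) Γ((d−1)/2) Γ(d/2) ) ) · ( (3/(d−1)) s^{d−1} (c²t² − s²)^{(d+1)/2} − (2/d) s^{d+1} (c²t² − s²)^{(d−1)/2} + (3(d+1)/(d(d+2))) s^{d+3} (c²t² − s²)^{(d−3)/2} ). -/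

import Mathlib

/-!
Expanding the integrand, the claim is that against a radial weight `h ‖x‖` on the ball the factor
`x_d ^ 2` may be replaced by `‖x‖ ^ 2 / d` and `x_d ^ 4` by `3 ‖x‖ ^ 4 / (d (d + 2))`; the radial
integrals that remain are evaluated in polar coordinates (`setIntegral_ball_fun_norm`), where the
area of the unit sphere `2 π ^ (d / 2) / Γ(d / 2)` produces the constant in front of `f`.

The moment identities follow from the invariance of the weighted measure under reflections
(`setIntegral_inner_eq_of_norm_eq`). All coordinates have equal second moments, which sum to the
moment of `‖x‖ ^ 2`. For fourth moments, comparing `e_i ± e_j` with `√2 e_i` gives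
`∫ x_i ^ 4 = 3 ∫ x_i ^ 2 x_j ^ 2` for `i ≠ j`, and expanding `‖x‖ ^ 4 = (∑ x_i ^ 2) ^ 2` gives the
factor `d + d (d - 1) / 3 = d (d + 2) / 3`. All the integrals converge because `r < c t` keeps
`c² t² - ‖x‖²` away from zero, even when the exponent `(d - 3) / 2` is negative.
-/

open MeasureTheory Finset

lemma integrableOn_ball_mul_norm {d : ℕ} {r : ℝ} {h : ℝ → ℝ} (hh : ContinuousOn h (Set.Icc 0 r))
    {P : EuclideanSpace ℝ (Fin d) → ℝ} (hP : Continuous P) :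
    IntegrableOn (fun x => P x * h ‖x‖) (Metric.ball 0 r) := by
  have hc : ContinuousOn (fun x : EuclideanSpace ℝ (Fin d) => P x * h ‖x‖)
      (Metric.closedBall 0 r) := by
    refine hP.continuousOn.mul (hh.comp continuous_norm.continuousOn ?_)
    intro x hx
    exact ⟨norm_nonneg x, by simpa using hx⟩
  exact (hc.integrableOn_compact (isCompact_closedBall 0 r)).mono_set Metric.ball_subset_closedBall

/-- Rotation invariance: a reflection exchanges two vectors of equal norm, so integrating a function
of `⟪u, x⟫` against a radial weight depends on `u` only through its norm. -/
lemma setIntegral_inner_eq_of_norm_eq {d : ℕ} (r : ℝ) (h φ : ℝ → ℝ)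
    {u v : EuclideanSpace ℝ (Fin d)} (huv : ‖u‖ = ‖v‖) :
    ∫ x in Metric.ball (0 : EuclideanSpace ℝ (Fin d)) r, φ (inner ℝ u x) * h ‖x‖ =
      ∫ x in Metric.ball (0 : EuclideanSpace ℝ (Fin d)) r, φ (inner ℝ v x) * h ‖x‖ := by
  set R := (Submodule.span ℝ {u - v})ᗮ.reflection with hR
  have hRu : R u = v := Submodule.reflection_sub huv
  have hpre : R ⁻¹' Metric.ball 0 r = Metric.ball 0 r := by
    ext x; simp
  have := R.measurePreserving.setIntegral_preimage_emb
    R.toHomeomorph.measurableEmbedding (fun x => φ (inner ℝ v x) * h ‖x‖) (Metric.ball 0 r)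
  rw [hpre] at this
  rw [← this]
  refine integral_congr_ae (Filter.Eventually.of_forall fun x => ?_)
  simp only [← hRu, LinearIsometryEquiv.inner_map_map, LinearIsometryEquiv.norm_map]

lemma setIntegral_coord_sq {d : ℕ} {r : ℝ} {h : ℝ → ℝ} (hh : ContinuousOn h (Set.Icc 0 r))
    (i : Fin d) :
    (d : ℝ) * ∫ x in Metric.ball (0 : EuclideanSpace ℝ (Fin d)) r, x i ^ 2 * h ‖x‖ =
      ∫ x in Metric.ball (0 : EuclideanSpace ℝ (Fin d)) r, ‖x‖ ^ 2 * h ‖x‖ := by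
  have hsym (j : Fin d) :
      ∫ x in Metric.ball (0 : EuclideanSpace ℝ (Fin d)) r, x j ^ 2 * h ‖x‖ =
        ∫ x in Metric.ball (0 : EuclideanSpace ℝ (Fin d)) r, x i ^ 2 * h ‖x‖ := by
    simpa [EuclideanSpace.inner_single_left] using
      setIntegral_inner_eq_of_norm_eq r h (fun y => y ^ 2)
        (u := EuclideanSpace.single j (1 : ℝ)) (v := EuclideanSpace.single i (1 : ℝ)) (by simp)
  simp_rw [EuclideanSpace.real_norm_sq_eq, Finset.sum_mul]
  rw [integral_finsetSum _ fun j _ => integrableOn_ball_mul_norm hh (by fun_prop)]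
  simp [hsym]

/-- For `i ≠ j`, comparing the fourth moments along `e_i + e_j`, `e_i - e_j` and `√2 e_i` gives
`∫ x_i⁴ = 3 ∫ x_i² x_j²` against every radial weight. -/
lemma setIntegral_coord_sq_mul_sq {d : ℕ} {r : ℝ} {h : ℝ → ℝ}
    (hh : ContinuousOn h (Set.Icc 0 r)) {i j : Fin d} (hij : i ≠ j) :
    3 * ∫ x in Metric.ball (0 : EuclideanSpace ℝ (Fin d)) r, (x i ^ 2 * x j ^ 2) * h ‖x‖ =
      ∫ x in Metric.ball (0 : EuclideanSpace ℝ (Fin d)) r, x i ^ 4 * h ‖x‖ := by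
  set e : Fin d → EuclideanSpace ℝ (Fin d) := fun k => EuclideanSpace.single k (1 : ℝ) with he
  have hin (k : Fin d) (x : EuclideanSpace ℝ (Fin d)) : inner ℝ (e k) x = x k := by
    simp [he, EuclideanSpace.inner_single_left]
  have hee : inner ℝ (e i) (e j) = (0 : ℝ) := by
    rw [hin]; simp [he, hij]
  have hen (k : Fin d) : ‖e k‖ = 1 := by simp [he]
  have h1 : ‖e i + e j‖ = ‖(√2 : ℝ) • e i‖ := by
    rw [norm_smul, hen, ← sq_eq_sq₀ (by positivity) (by positivity), norm_add_sq_real, hee, hen,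
      hen]
    norm_num
  have h2 : ‖e i - e j‖ = ‖(√2 : ℝ) • e i‖ := by
    rw [norm_smul, hen, ← sq_eq_sq₀ (by positivity) (by positivity), norm_sub_sq_real, hee, hen,
      hen]
    norm_num
  have h3 : ‖e j‖ = ‖e i‖ := by rw [hen, hen]
  have k1 := setIntegral_inner_eq_of_norm_eq r h (fun y => y ^ 4) h1
  have k2 := setIntegral_inner_eq_of_norm_eq r h (fun y => y ^ 4) h2
  have k3 := setIntegral_inner_eq_of_norm_eq r h (fun y => y ^ 4) h3
  have h4 : (√2 : ℝ) ^ 4 = 4 := by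
    rw [show (4 : ℕ) = 2 * 2 from rfl, pow_mul, Real.sq_sqrt (by norm_num)]; norm_num
  simp only [inner_add_left, inner_sub_left, real_inner_smul_left, hin, mul_pow, h4, mul_assoc,
    integral_const_mul] at k1 k2 k3
  have I4 (k : Fin d) : IntegrableOn (fun x : EuclideanSpace ℝ (Fin d) => x k ^ 4 * h ‖x‖)
    (Metric.ball 0 r) := integrableOn_ball_mul_norm hh (by fun_prop)
  have I22 : IntegrableOn (fun x : EuclideanSpace ℝ (Fin d) => (x i ^ 2 * x j ^ 2) * h ‖x‖)
    (Metric.ball 0 r) := integrableOn_ball_mul_norm hh (by fun_prop)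
  have Ip : IntegrableOn (fun x : EuclideanSpace ℝ (Fin d) => (x i + x j) ^ 4 * h ‖x‖)
    (Metric.ball 0 r) := integrableOn_ball_mul_norm hh (by fun_prop)
  have Im : IntegrableOn (fun x : EuclideanSpace ℝ (Fin d) => (x i - x j) ^ 4 * h ‖x‖)
    (Metric.ball 0 r) := integrableOn_ball_mul_norm hh (by fun_prop)
  have key : (∫ x in Metric.ball (0 : EuclideanSpace ℝ (Fin d)) r, (x i + x j) ^ 4 * h ‖x‖) +
      ∫ x in Metric.ball (0 : EuclideanSpace ℝ (Fin d)) r, (x i - x j) ^ 4 * h ‖x‖ =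
      2 * (∫ x in Metric.ball (0 : EuclideanSpace ℝ (Fin d)) r, x i ^ 4 * h ‖x‖) +
      12 * (∫ x in Metric.ball (0 : EuclideanSpace ℝ (Fin d)) r, (x i ^ 2 * x j ^ 2) * h ‖x‖) +
      2 * (∫ x in Metric.ball (0 : EuclideanSpace ℝ (Fin d)) r, x j ^ 4 * h ‖x‖) := by
    rw [← integral_add Ip Im, ← integral_const_mul, ← integral_const_mul, ← integral_const_mul,
      ← integral_add ((I4 i).const_mul 2) (I22.const_mul 12), ← integral_add _ ((I4 j).const_mul 2)]
    swap
    · exact ((I4 i).const_mul 2).add (I22.const_mul 12)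
    refine integral_congr_ae (Filter.Eventually.of_forall fun x => ?_)
    simp only
    ring
  linarith

lemma setIntegral_coord_pow_four {d : ℕ} {r : ℝ} {h : ℝ → ℝ}
    (hh : ContinuousOn h (Set.Icc 0 r)) (i : Fin d) :
    (d : ℝ) * (d + 2) * ∫ x in Metric.ball (0 : EuclideanSpace ℝ (Fin d)) r, x i ^ 4 * h ‖x‖ =
      3 * ∫ x in Metric.ball (0 : EuclideanSpace ℝ (Fin d)) r, ‖x‖ ^ 4 * h ‖x‖ := by
  set A := ∫ x in Metric.ball (0 : EuclideanSpace ℝ (Fin d)) r, x i ^ 4 * h ‖x‖ with hA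
  have hsym (j : Fin d) :
      ∫ x in Metric.ball (0 : EuclideanSpace ℝ (Fin d)) r, x j ^ 4 * h ‖x‖ = A := by
    simpa [EuclideanSpace.inner_single_left] using
      setIntegral_inner_eq_of_norm_eq r h (fun y => y ^ 4)
        (u := EuclideanSpace.single j (1 : ℝ)) (v := EuclideanSpace.single i (1 : ℝ)) (by simp)
  have hjk (j k : Fin d) :
      ∫ x in Metric.ball (0 : EuclideanSpace ℝ (Fin d)) r, (x j ^ 2 * x k ^ 2) * h ‖x‖ =
        A / 3 + if j = k then 2 * A / 3 else 0 := by
    split_ifs with hj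
    · subst hj
      simp_rw [← pow_add]
      rw [hsym]; ring
    · linarith [setIntegral_coord_sq_mul_sq hh hj, hsym j]
  have hn (x : EuclideanSpace ℝ (Fin d)) :
      ‖x‖ ^ 4 * h ‖x‖ = ∑ j, ∑ k, (x j ^ 2 * x k ^ 2) * h ‖x‖ := by
    rw [show (4 : ℕ) = 2 * 2 from rfl, pow_mul, EuclideanSpace.real_norm_sq_eq, sq,
      Finset.sum_mul_sum, Finset.sum_mul]
    simp_rw [Finset.sum_mul]
  simp_rw [hn]
  rw [integral_finsetSum _ fun j _ => integrable_finsetSum _ fun k _ =>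
    integrableOn_ball_mul_norm hh (by fun_prop)]
  have hsum (j : Fin d) :
      ∫ x in Metric.ball (0 : EuclideanSpace ℝ (Fin d)) r, ∑ k, (x j ^ 2 * x k ^ 2) * h ‖x‖ =
        ∑ k, (A / 3 + if j = k then 2 * A / 3 else 0) := by
    rw [integral_finsetSum _ fun k _ => integrableOn_ball_mul_norm hh (by fun_prop)]
    simp_rw [hjk]
  simp_rw [hsum]
  simp [Finset.sum_add_distrib]
  ring

/-- Polar coordinates on a ball for a radial function. -/
lemma setIntegral_ball_fun_norm {d : ℕ} (hd : 2 ≤ d) {r : ℝ} (hr : 0 < r) (f : ℝ → ℝ) :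
    ∫ x in Metric.ball (0 : EuclideanSpace ℝ (Fin d)) r, f ‖x‖ =
      2 * Real.pi ^ ((d : ℝ) / 2) / Real.Gamma ((d : ℝ) / 2) *
        ∫ s in (0 : ℝ)..r, s ^ (d - 1) * f s := by
  have : Nonempty (Fin d) := ⟨⟨0, by omega⟩⟩
  have hd0 : (0 : ℝ) < d := by positivity
  have hind (x : EuclideanSpace ℝ (Fin d)) : (Metric.ball 0 r).indicator (fun x => f ‖x‖) x =
      (Set.Iio r).indicator f ‖x‖ := by
    by_cases hx : ‖x‖ < r <;> simp [hx]
  rw [← integral_indicator measurableSet_ball]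
  simp_rw [hind]
  rw [integral_fun_norm_addHaar, finrank_euclideanSpace_fin, Measure.real,
    EuclideanSpace.volume_ball]
  have hpolar : ∫ y in Set.Ioi (0 : ℝ), y ^ (d - 1) • (Set.Iio r).indicator f y =
      ∫ s in (0 : ℝ)..r, s ^ (d - 1) * f s := by
    rw [intervalIntegral.integral_of_le hr.le, integral_Ioc_eq_integral_Ioo, ← Set.Ioi_inter_Iio,
      ← setIntegral_indicator measurableSet_Iio]
    refine integral_congr_ae (Filter.Eventually.of_forall fun y => ?_)
    simp [Set.indicator_apply]
  rw [hpolar]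
  have hpi : √Real.pi ^ d = Real.pi ^ ((d : ℝ) / 2) := by
    rw [Real.sqrt_eq_rpow, ← Real.rpow_natCast, ← Real.rpow_mul Real.pi_pos.le]
    congr 1; ring
  have hG : 0 < Real.Gamma ((d : ℝ) / 2) := Real.Gamma_pos_of_pos (by positivity)
  simp only [ENNReal.ofReal_one, one_pow, one_mul, Fintype.card_fin, smul_eq_mul, nsmul_eq_mul,
    hpi]
  rw [Real.Gamma_add_one (by positivity), ENNReal.toReal_ofReal (by positivity)]
  field_simp

theorem stmt19 (d : ℕ) (hd : 2 ≤ d) (c t : ℝ) (hc : 0 < c) (ht : 0 < t)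
    (r : ℝ) (hr0 : 0 < r) (hr : r < c * t) :
    (∫ x in Metric.ball (0 : EuclideanSpace ℝ (Fin d)) r,
      Real.Gamma (2 * ((d : ℝ) + 1)) /
          (Real.pi ^ (((d : ℝ) - 1) / 2) * (2 * c * t) ^ (2 * d + 1) * ((d : ℝ) + 2) *
            Real.Gamma ((d : ℝ) + 1) * Real.Gamma (((d : ℝ) - 1) / 2)) *
        (3 / ((d : ℝ) - 1) * (c ^ 2 * t ^ 2 - ‖x‖ ^ 2) ^ (((d : ℝ) + 1) / 2) -
          2 * x ⟨d - 1, by omega⟩ ^ 2 * (c ^ 2 * t ^ 2 - ‖x‖ ^ 2) ^ (((d : ℝ) - 1) / 2) +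
          ((d : ℝ) + 1) * x ⟨d - 1, by omega⟩ ^ 4 *
            (c ^ 2 * t ^ 2 - ‖x‖ ^ 2) ^ (((d : ℝ) - 3) / 2)))
    = ∫ s in (0 : ℝ)..r,
        2 * Real.sqrt Real.pi * Real.Gamma (2 * ((d : ℝ) + 1)) /
            ((2 * c * t) ^ (2 * d + 1) * ((d : ℝ) + 2) * Real.Gamma ((d : ℝ) + 1) *
              Real.Gamma (((d : ℝ) - 1) / 2) * Real.Gamma ((d : ℝ) / 2)) *
          (3 / ((d : ℝ) - 1) * s ^ (d - 1) * (c ^ 2 * t ^ 2 - s ^ 2) ^ (((d : ℝ) + 1) / 2) -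
            2 / (d : ℝ) * s ^ (d + 1) * (c ^ 2 * t ^ 2 - s ^ 2) ^ (((d : ℝ) - 1) / 2) +
            3 * ((d : ℝ) + 1) / ((d : ℝ) * ((d : ℝ) + 2)) * s ^ (d + 3) *
              (c ^ 2 * t ^ 2 - s ^ 2) ^ (((d : ℝ) - 3) / 2)) := by
  have hd2 : (2 : ℝ) ≤ d := by exact_mod_cast hd
  -- `s ≤ r < c t` keeps the base positive, so the power is continuous for negative `α` too
  have hcont (α : ℝ) : ContinuousOn (fun s : ℝ => (c ^ 2 * t ^ 2 - s ^ 2) ^ α) (Set.Icc 0 r) := by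
    refine ContinuousOn.rpow_const (by fun_prop) fun s hs => Or.inl ?_
    have : s < c * t := hs.2.trans_lt hr
    nlinarith [hs.1]
  set i : Fin d := ⟨d - 1, by omega⟩ with hi
  have hBall (P : EuclideanSpace ℝ (Fin d) → ℝ) (hP : Continuous P) (α : ℝ) :
      IntegrableOn (fun x => P x * (c ^ 2 * t ^ 2 - ‖x‖ ^ 2) ^ α) (Metric.ball 0 r) :=
    integrableOn_ball_mul_norm (hcont α) hP
  have hInterval (k : ℝ) (n : ℕ) (α : ℝ) :
      IntervalIntegrable (fun s => k * s ^ n * (c ^ 2 * t ^ 2 - s ^ 2) ^ α) volume 0 r := by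
    apply ContinuousOn.intervalIntegrable
    rw [Set.uIcc_of_le hr0.le]
    exact ContinuousOn.mul (by fun_prop) (hcont α)
  have e2 := setIntegral_coord_sq (hcont (((d : ℝ) - 1) / 2)) i
  have e4 := setIntegral_coord_pow_four (hcont (((d : ℝ) - 3) / 2)) i
  have p0 := setIntegral_ball_fun_norm hd hr0
    (fun s => (c ^ 2 * t ^ 2 - s ^ 2) ^ (((d : ℝ) + 1) / 2))
  have p2 := setIntegral_ball_fun_norm hd hr0
    (fun s => s ^ 2 * (c ^ 2 * t ^ 2 - s ^ 2) ^ (((d : ℝ) - 1) / 2))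
  have p4 := setIntegral_ball_fun_norm hd hr0
    (fun s => s ^ 4 * (c ^ 2 * t ^ 2 - s ^ 2) ^ (((d : ℝ) - 3) / 2))
  rw [p2] at e2
  rw [p4] at e4
  simp only [← mul_assoc, ← pow_add] at e2 e4
  rw [show d - 1 + 2 = d + 1 by omega] at e2
  rw [show d - 1 + 4 = d + 3 by omega] at e4
  rw [integral_const_mul, integral_add, integral_sub, intervalIntegral.integral_const_mul,
    intervalIntegral.integral_add, intervalIntegral.integral_sub]
  rotate_left
  · exact hInterval _ _ _
  · exact hInterval _ _ _
  · exact (hInterval _ _ _).sub (hInterval _ _ _)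
  · exact hInterval _ _ _
  · exact hBall _ (by fun_prop) _
  · exact hBall _ (by fun_prop) _
  · exact (hBall _ (by fun_prop) _).sub (hBall _ (by fun_prop) _)
  · exact hBall _ (by fun_prop) _
  simp only [mul_assoc, integral_const_mul, intervalIntegral.integral_const_mul] at p0 e2 e4 ⊢
  rw [p0]
  have hpi : Real.pi ^ ((d : ℝ) / 2) = Real.pi ^ (((d : ℝ) - 1) / 2) * √Real.pi := by
    rw [Real.sqrt_eq_rpow, ← Real.rpow_add Real.pi_pos]
    congr 1; ring
  rw [hpi] at e2 e4 ⊢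
  have hpp : 0 < Real.pi ^ (((d : ℝ) - 1) / 2) := Real.rpow_pos_of_pos Real.pi_pos _
  have hG : 0 < Real.Gamma ((d : ℝ) / 2) := Real.Gamma_pos_of_pos (by linarith)
  have hG1 : 0 < Real.Gamma (((d : ℝ) - 1) / 2) := Real.Gamma_pos_of_pos (by linarith)
  have hG2 : 0 < Real.Gamma ((d : ℝ) + 1) := Real.Gamma_pos_of_pos (by linarith)
  have hd0 : (d : ℝ) ≠ 0 := by linarith
  have hd1 : (d : ℝ) - 1 ≠ 0 := by linarith
  have hd22 : (d : ℝ) + 2 ≠ 0 := by linarith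
  rw [mul_comm, ← eq_div_iff hd0] at e2
  rw [← mul_assoc, mul_comm, ← eq_div_iff (mul_ne_zero hd0 hd22)] at e4
  rw [e2, e4]
  field_simp
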